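/- Let c > 0 with 1/c an integer, let ℓ, s, t > 0 be integers, let d > 0, and let ε > 0 satisfy (2 + 1/c)^{(t+1)(ℓ+t)}·ε < d/3. Let G be an ε-sparse (ε|G|^{1−c}, ε|G|)-coherent graph. For i = 1, 2 let L_i be a levelling in G of height s, t respectively, with heart H_i, apex a_i, base B_i, such that |B_i| ≥ d|G| for i = 1, 2; V(L_1) ∩ V(L_2) = ({a_1} ∩ {a_2}) ∪ (B_1 ∩ B_2); and every edge between H_1 and V(L_2) has one end in the penultimate level of L_1 and the other in B_2. Then there is an induced path (or cycle if a_1 = a_2) of length ℓ + s + t between a_1 and a_2 with vertex set contained in H_1 ∪ B_1 ∪ H_2 ∪ B_2. -/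

import Mathlib

/-- (L 0, ..., L k) is a levelling in G: the sets are pairwise disjoint, |L 0| = 1,
each L (i-1) covers L i, and L 0 ∪ ... ∪ L (i-2) is anticomplete to L i. -/
def IsLevelling {V : Type} (G : SimpleGraph V) (L : ℕ → Finset V) (k : ℕ) : Prop :=
  1 ≤ k ∧ (L 0).card = 1 ∧
  (∀ i j, i < j → j ≤ k → Disjoint (L i) (L j)) ∧
  (∀ i, 1 ≤ i → i ≤ k → ∀ v ∈ L i, ∃ u ∈ L (i - 1), G.Adj u v) ∧
  (∀ i, 2 ≤ i → i ≤ k → ∀ j, j ≤ i - 2 → ∀ u ∈ L j, ∀ v ∈ L i, ¬ G.Adj u v)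


open Classical in
/-- the vertices of `B` with a neighbour in `A` -/
noncomputable def covS {V : Type} (G : SimpleGraph V) (A B : Finset V) : Finset V :=
  B.filter (fun b => ∃ a ∈ A, G.Adj a b)

theorem mem_covS {V : Type} {G : SimpleGraph V} {A B : Finset V} {b : V} :
    b ∈ covS G A B ↔ b ∈ B ∧ ∃ a ∈ A, G.Adj a b := by
  simp [covS]

theorem covS_insert_le {V : Type} [DecidableEq V] (G : SimpleGraph V) (a : V) (A B : Finset V) :
    (covS G (insert a A) B).card ≤ (covS G {a} B).card + (covS G A B).card := by
  refine le_trans (Finset.card_le_card ?_) (Finset.card_union_le _ _)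
  intro b hb
  simp only [mem_covS, Finset.mem_union, Finset.mem_insert, Finset.mem_singleton] at hb ⊢
  grind

theorem grow {V : Type} [DecidableEq V] (G : SimpleGraph V) (B : Finset V) (η : ℝ)
    (hdeg : ∀ v, ((covS G {v} B).card : ℝ) ≤ η) (A : Finset V) (τ : ℝ) (hτ : 0 ≤ τ) :
    τ - η ≤ ((covS G A B).card : ℝ) →
      ∃ A' ⊆ A, τ - η ≤ ((covS G A' B).card : ℝ) ∧ ((covS G A' B).card : ℝ) ≤ τ := by
  induction A using Finset.induction with
  | empty =>
    intro h
    refine ⟨∅, le_rfl, h, ?_⟩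
    have : covS G ∅ B = ∅ := by ext; simp [mem_covS]
    simpa [this] using hτ
  | insert a A _ ih =>
    intro h
    by_cases h1 : ((covS G (insert a A) B).card : ℝ) ≤ τ
    · exact ⟨_, le_rfl, h, h1⟩
    · have h2 : ((covS G (insert a A) B).card : ℝ) ≤ (covS G {a} B).card + (covS G A B).card := by
        exact_mod_cast covS_insert_le G a A B
      have h3 := hdeg a
      obtain ⟨A', hA', h4⟩ := ih (by linarith)
      exact ⟨A', hA'.trans (Finset.subset_insert _ _), h4⟩

theorem avg {V : Type} [DecidableEq V] (f : V → ℝ) (hf : ∀ v, 0 ≤ f v) (k : ℕ) : ∀ (p : ℕ) (C : Finset V),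
    C.card = p → k ≤ p → ∃ S ⊆ C, S.card = k ∧ (k : ℝ) * ∑ c ∈ C, f c ≤ p * ∑ c ∈ S, f c := by
  intro p
  induction p with
  | zero =>
    intro C hC hk
    exact ⟨C, le_rfl, by omega, by simp_all⟩
  | succ p ih =>
    intro C hC hk
    by_cases hkp : k = p + 1
    · exact ⟨C, le_rfl, by omega, by subst hkp; exact le_rfl⟩
    · have hne : C.Nonempty := by rw [← Finset.card_pos]; omega
      obtain ⟨c, hc, hmin⟩ := Finset.exists_min_image C f hne
      have h1 : ((p + 1 : ℕ) : ℝ) * f c ≤ ∑ x ∈ C, f x := by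
        have := Finset.card_nsmul_le_sum C f (f c) hmin
        rw [hC] at this; simpa using this
      have h2 := Finset.add_sum_erase C f hc
      have hcard : (C.erase c).card = p := by rw [Finset.card_erase_of_mem hc]; omega
      obtain ⟨S, hS, hSk, hS2⟩ := ih (C.erase c) hcard (by omega)
      refine ⟨S, hS.trans (Finset.erase_subset _ _), hSk, ?_⟩
      push_cast at h1 ⊢
      rcases Nat.eq_zero_or_pos p with hp | hp
      · have hk0 : k = 0 := by omega
        subst hk0
        have : 0 ≤ ∑ c ∈ S, f c := Finset.sum_nonneg (fun c _ => hf c)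
        have : (0:ℝ) ≤ p := by positivity
        simp; positivity
      · have hp' : (0:ℝ) < p := by exact_mod_cast hp
        have hk0 : (0:ℝ) ≤ k := by positivity
        set T := ∑ x ∈ C, f x
        set T' := ∑ x ∈ C.erase c, f x
        set Q := ∑ x ∈ S, f x
        have h3 : p * T ≤ (p + 1) * T' := by nlinarith
        have h4 : p * (k * T) ≤ p * ((p + 1) * Q) := by nlinarith
        exact le_of_mul_le_mul_left h4 hp'

theorem avgCov {V : Type} [DecidableEq V] (G : SimpleGraph V) (C W : Finset V)
    (hC : ∀ b ∈ W, ∃ c ∈ C, G.Adj c b) (k : ℕ) (hk : k ≤ C.card) :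
    ∃ S ⊆ C, S.card = k ∧ (k : ℝ) * W.card ≤ C.card * ((covS G S W).card : ℝ) := by
  classical
  have : ∃ φ : V → V, ∀ b ∈ W, φ b ∈ C ∧ G.Adj (φ b) b := by
    choose! φ hφ using hC
    exact ⟨φ, hφ⟩
  obtain ⟨φ, hφ⟩ := this
  obtain ⟨S, hS, hSk, h⟩ := avg (fun c => ((W.filter (fun b => φ b = c)).card : ℝ))
    (fun v => by positivity) k _ C rfl hk
  refine ⟨S, hS, hSk, ?_⟩
  have h1 : W.card = ∑ c ∈ C, (W.filter (fun b => φ b = c)).card :=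
    Finset.card_eq_sum_card_fiberwise (fun b hb => (hφ b hb).1)
  have h2 : ∑ c ∈ S, (W.filter (fun b => φ b = c)).card ≤ (covS G S W).card := by
    have h3 : (W.filter (fun b => φ b ∈ S)).card
        = ∑ c ∈ S, ((W.filter (fun b => φ b ∈ S)).filter (fun b => φ b = c)).card :=
      Finset.card_eq_sum_card_fiberwise (fun b hb => by simpa using (Finset.mem_filter.1 hb).2)
    have h4 : ∀ c ∈ S, (W.filter (fun b => φ b = c)).card
        = ((W.filter (fun b => φ b ∈ S)).filter (fun b => φ b = c)).card := by
      intro c hc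
      congr 1
      ext b
      simp only [Finset.mem_filter]
      grind
    rw [Finset.sum_congr rfl h4, ← h3]
    apply Finset.card_le_card
    intro b hb
    rw [Finset.mem_filter] at hb
    exact mem_covS.2 ⟨hb.1, φ b, hb.2, (hφ b hb.1).2⟩
  have h1' : (W.card : ℝ) = ∑ c ∈ C, ((W.filter (fun b => φ b = c)).card : ℝ) := by
    exact_mod_cast h1
  have h2' : ∑ c ∈ S, ((W.filter (fun b => φ b = c)).card : ℝ) ≤ ((covS G S W).card : ℝ) := by
    exact_mod_cast h2
  rw [h1']
  refine h.trans ?_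
  gcongr

theorem smallCov {V : Type} [DecidableEq V] (G : SimpleGraph V) (C W : Finset V)
    (hC : ∀ b ∈ W, ∃ c ∈ C, G.Adj c b) (k : ℕ) (hk : k ≤ W.card) :
    ∃ S ⊆ C, S.card ≤ k ∧ k ≤ (covS G S W).card := by
  classical
  have : ∃ φ : V → V, ∀ b ∈ W, φ b ∈ C ∧ G.Adj (φ b) b := by
    choose! φ hφ using hC
    exact ⟨φ, hφ⟩
  obtain ⟨φ, hφ⟩ := this
  obtain ⟨T, hT, hTk⟩ := Finset.exists_subset_card_eq hk
  refine ⟨T.image φ, ?_, ?_, ?_⟩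
  · intro c hc
    obtain ⟨b, hb, rfl⟩ := Finset.mem_image.1 hc
    exact (hφ b (hT hb)).1
  · rw [← hTk]; exact Finset.card_image_le
  · rw [← hTk]
    apply Finset.card_le_card
    intro b hb
    exact mem_covS.2 ⟨hT hb, φ b, Finset.mem_image_of_mem _ hb, (hφ b (hT hb)).2⟩

theorem covS_le_one {V : Type} (G : SimpleGraph V) (B C : Finset V) (η : ℝ) (hη : 0 ≤ η)
    (hdeg : ∀ v, ((covS G {v} B).card : ℝ) ≤ η) (h : C.card ≤ 1) :
    ((covS G C B).card : ℝ) ≤ η := by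
  rcases Nat.le_one_iff_eq_zero_or_eq_one.1 h with h | h
  · rw [Finset.card_eq_zero] at h
    subst h
    have : covS G ∅ B = ∅ := by ext; simp [mem_covS]
    simpa [this] using hη
  · obtain ⟨v, rfl⟩ := Finset.card_eq_one.1 h
    exact hdeg v

theorem sub_le_sdiff {V : Type} [DecidableEq V] (A B : Finset V) :
    (A.card : ℝ) - B.card ≤ ((A \ B).card : ℝ) := by
  have := Finset.le_card_sdiff B A
  have : A.card ≤ (A \ B).card + B.card := by omega
  have : (A.card : ℝ) ≤ (A \ B).card + B.card := by exact_mod_cast this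
  linarith

theorem split {V : Type} [DecidableEq V] (G : SimpleGraph V) (A C B : Finset V) (η q r κ : ℝ) (m : ℕ)
    (hm : 1 ≤ m) (hq : 0 < q) (hr : 1 ≤ r) (hqr : q * r = η) (hq2 : 2 * q ≤ r ^ (m - 1)) (hκ : 0 ≤ κ)
    (hdeg : ∀ v, ((covS G {v} B).card : ℝ) ≤ η)
    (hA : ∀ b ∈ B, ∃ a ∈ A, G.Adj a b) (hC : ∀ b ∈ B, ∃ c ∈ C, G.Adj c b)
    (hB : (m + 1) * (κ + 3 * η) ≤ (B.card : ℝ)) :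
    ∃ A' ⊆ A, ∃ C' ⊆ C, κ ≤ ((covS G A' B \ covS G C' B).card : ℝ) ∧
      q ≤ ((covS G C' B \ covS G A' B).card : ℝ) := by
  by_contra bad
  push Not at bad
  have hη : 0 < η := by rw [← hqr]; positivity
  have hqη : q ≤ η := by nlinarith
  have hone : ∀ A' ⊆ A, ∀ C' ⊆ C, C'.card ≤ 1 → κ + η ≤ ((covS G A' B).card : ℝ) →
      ((covS G C' B \ covS G A' B).card : ℝ) < q := by
    intro A' hA' C' hC' h1 h2
    apply bad A' hA' C' hC'
    have := covS_le_one G B C' η hη.le hdeg h1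
    have := sub_le_sdiff (covS G A' B) (covS G C' B)
    linarith
  have hm' : (1:ℝ) ≤ m := by exact_mod_cast hm
  have key : ∀ i, i < m → ∃ A' ⊆ A, ∃ C' ⊆ C,
      ((m:ℝ) - i) * (κ + 3 * η) - η ≤ ((covS G A' B).card : ℝ) ∧
      ((covS G A' B).card : ℝ) ≤ ((m:ℝ) - i) * (κ + 3 * η) ∧
      q ≤ ((covS G C' B \ covS G A' B).card : ℝ) ∧ (C'.card : ℝ) < r ^ (m - 1 - i) := by
    intro i
    induction i with
    | zero =>
      intro _
      have hcA : covS G A B = B := by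
        ext b; rw [mem_covS]; exact ⟨fun h => h.1, fun h => ⟨h, hA b h⟩⟩
      obtain ⟨A', hA', h1, h2⟩ := grow G B η hdeg A (m * (κ + 3 * η)) (by positivity)
        (by rw [hcA]; nlinarith)
      have h3 := sub_le_sdiff B (covS G A' B)
      have hk : ⌈q⌉₊ ≤ (B \ covS G A' B).card := by
        apply Nat.ceil_le.2
        linarith
      obtain ⟨C', hC', h4, h5⟩ := smallCov G C (B \ covS G A' B)
        (fun b hb => hC b (Finset.mem_sdiff.1 hb).1) _ hk
      have h6 : q ≤ ((covS G C' B \ covS G A' B).card : ℝ) := by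
        have e : covS G C' (B \ covS G A' B) = covS G C' B \ covS G A' B := by
          ext b; simp only [mem_covS, Finset.mem_sdiff]; tauto
        rw [e] at h5
        exact (Nat.le_ceil q).trans (by exact_mod_cast h5)
      refine ⟨A', hA', C', hC', by simpa using h1, by simpa using h2, h6, ?_⟩
      rcases le_or_gt q 1 with hq1 | hq1
      · have : ⌈q⌉₊ ≤ 1 := by apply Nat.ceil_le.2; simpa using hq1
        have := hone A' hA' C' hC' (by omega) (by nlinarith)
        linarith
      · have := Nat.ceil_lt_add_one hq.le
        have h4' : (C'.card : ℝ) ≤ ⌈q⌉₊ := by exact_mod_cast h4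
        simp only [Nat.sub_zero]
        linarith
    | succ i ih =>
      intro hi
      obtain ⟨A₁, hA₁, C₁, hC₁, h1, h2, h3, h4⟩ := ih (by omega)
      have hi' : (i:ℝ) + 1 + 1 ≤ m := by exact_mod_cast hi
      obtain ⟨A', hA', h5, h6⟩ := grow G B η hdeg A₁ ((m - (i + 1 : ℕ)) * (κ + 3 * η))
        (by push_cast; apply mul_nonneg <;> [linarith; positivity]) (by push_cast; linarith)
      have hbad : ((covS G A₁ B \ covS G C₁ B).card : ℝ) < κ := by
        by_contra hh
        push Not at hh
        have := bad A₁ hA₁ C₁ hC₁ hh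
        linarith
      -- the region covered by C₁
      set W := (covS G A₁ B \ covS G A' B) ∩ covS G C₁ B with hW
      have hWc : 2 * η ≤ (W.card : ℝ) := by
        have e1 := sub_le_sdiff (covS G A₁ B) (covS G A' B)
        have e2 := sub_le_sdiff (covS G A₁ B \ covS G A' B) (covS G A₁ B \ covS G C₁ B)
        have e3 : ((covS G A₁ B \ covS G A' B) \ (covS G A₁ B \ covS G C₁ B)) ⊆ W := by
          intro b hb
          simp only [hW, Finset.mem_sdiff, Finset.mem_inter] at hb ⊢
          tauto
        have e4 : (((covS G A₁ B \ covS G A' B) \ (covS G A₁ B \ covS G C₁ B)).card : ℝ) ≤ W.card := by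
          exact_mod_cast Finset.card_le_card e3
        push_cast at h6
        linarith
      have hWpos : (0:ℝ) < W.card := by linarith
      have hWC : ∀ b ∈ W, ∃ c ∈ C₁, G.Adj c b := fun b hb =>
        (mem_covS.1 (Finset.mem_inter.1 hb).2).2
      have hWB : W ⊆ B := fun b hb => (mem_covS.1 (Finset.mem_inter.1 hb).2).1
      set k := ⌈(C₁.card : ℝ) * q / W.card⌉₊ with hk
      have hkC : k ≤ C₁.card := by
        apply Nat.ceil_le.2
        rw [div_le_iff₀ hWpos]
        gcongr
        linarith
      obtain ⟨C', hC', h7, h8⟩ := avgCov G C₁ W hWC k hkC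
      have hC1pos : (0:ℝ) < C₁.card := by
        have : W.Nonempty := by rw [← Finset.card_pos]; exact_mod_cast hWpos
        obtain ⟨b, hb⟩ := this
        obtain ⟨c, hc, _⟩ := hWC b hb
        exact_mod_cast Finset.card_pos.2 ⟨c, hc⟩
      have h9 : q ≤ ((covS G C' W).card : ℝ) := by
        have e1 : (C₁.card : ℝ) * q ≤ k * W.card := by
          rw [← div_le_iff₀ hWpos]; exact Nat.le_ceil _
        exact le_of_mul_le_mul_left (e1.trans h8) hC1pos
      have h10 : q ≤ ((covS G C' B \ covS G A' B).card : ℝ) := by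
        refine h9.trans ?_
        have : covS G C' W ⊆ covS G C' B \ covS G A' B := by
          intro b hb
          have hb' := mem_covS.1 hb
          rw [Finset.mem_sdiff]
          exact ⟨mem_covS.2 ⟨hWB hb'.1, hb'.2⟩,
            (Finset.mem_sdiff.1 (Finset.mem_inter.1 hb'.1).1).2⟩
        exact_mod_cast Finset.card_le_card this
      refine ⟨A', hA'.trans hA₁, C', hC'.trans hC₁, h5, h6, h10, ?_⟩
      have hk2 : 2 ≤ k := by
        by_contra hk1
        have := hone A' (hA'.trans hA₁) C' (hC'.trans hC₁) (by omega)
          (by push_cast at h5; nlinarith)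
        linarith
      have hk2' : (2:ℝ) ≤ k := by exact_mod_cast hk2
      have e1 : (k:ℝ) < C₁.card * q / W.card + 1 := Nat.ceil_lt_add_one (by positivity)
      have e2 : (C₁.card : ℝ) * q / W.card ≤ C₁.card * q / (2 * η) := by gcongr
      have e3 : (C₁.card : ℝ) * q / (2 * η) = C₁.card / (2 * r) := by
        rw [← hqr]; field_simp
      have e4 : (C₁.card : ℝ) / (2 * r) < r ^ (m - 1 - (i + 1)) / 2 := by
        have : r ^ (m - 1 - i) = r ^ (m - 1 - (i + 1)) * r := by
          rw [← pow_succ]; congr 1; omega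
        rw [this] at h4
        rw [div_lt_div_iff₀ (by positivity) (by norm_num)]
        linarith
      rw [h7]
      linarith
  obtain ⟨A', _, C', _, _, _, h3, h4⟩ := key (m - 1) (by omega)
  have : C' = ∅ := by
    rw [← Finset.card_eq_zero]
    simp at h4
    simpa using h4
  subst this
  have : covS G ∅ B = ∅ := by ext; simp [mem_covS]
  simp [this] at h3
  linarith

/-- A pair of levellings of heights `s + 1` and `t + 1` inside `W`, with hearts separated. -/
structure LPair {V : Type} (G : SimpleGraph V) (a₁ a₂ : V) (W : Finset V) (s t : ℕ)
    (L M : ℕ → Finset V) : Prop where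
  L0 : L 0 = {a₁}
  M0 : M 0 = {a₂}
  LW : ∀ i, i ≤ s + 1 → ∀ v ∈ L i, v ∈ W
  MW : ∀ i, i ≤ t + 1 → ∀ v ∈ M i, v ∈ W
  Ldis : ∀ i j, i < j → j ≤ s + 1 → ∀ v ∈ L i, v ∉ L j
  Mdis : ∀ i j, i < j → j ≤ t + 1 → ∀ v ∈ M i, v ∉ M j
  Lcov : ∀ i, i ≤ s → ∀ v ∈ L (i + 1), ∃ u ∈ L i, G.Adj u v
  Mcov : ∀ i, i ≤ t → ∀ v ∈ M (i + 1), ∃ u ∈ M i, G.Adj u v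
  Lanti : ∀ i j, i + 2 ≤ j → j ≤ s + 1 → ∀ u ∈ L i, ∀ v ∈ L j, ¬ G.Adj u v
  Manti : ∀ i j, i + 2 ≤ j → j ≤ t + 1 → ∀ u ∈ M i, ∀ v ∈ M j, ¬ G.Adj u v
  dis : ∀ i j, i ≤ s + 1 → j ≤ t + 1 → (i ≤ s ∨ j ≤ t) → ∀ v ∈ L i, v ∉ M j
  anti : ∀ i j, i ≤ s → j ≤ t + 1 → (i < s ∨ j ≤ t) → ∀ u ∈ L i, ∀ v ∈ M j, ¬ G.Adj u v

/-- `u 0, ..., u N` is an induced path from `a₁` to `a₂` inside `W`. -/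
def IndSeq {V : Type} (G : SimpleGraph V) (a₁ a₂ : V) (W : Finset V) (N : ℕ) (u : ℕ → V) : Prop :=
  u 0 = a₁ ∧ u N = a₂ ∧ (∀ i, i < N → G.Adj (u i) (u (i + 1))) ∧
  (∀ i j, i < j → j ≤ N → u i ≠ u j) ∧
  (∀ i j, i + 2 ≤ j → j ≤ N → ¬ G.Adj (u i) (u j)) ∧ (∀ i, i ≤ N → u i ∈ W)

theorem climb {V : Type} (G : SimpleGraph V) (L : ℕ → Finset V) : ∀ (k : ℕ),
    (∀ i, i < k → ∀ v ∈ L (i + 1), ∃ u ∈ L i, G.Adj u v) → ∀ x ∈ L k,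
    ∃ u : ℕ → V, u k = x ∧ (∀ i, i ≤ k → u i ∈ L i) ∧ ∀ i, i < k → G.Adj (u i) (u (i + 1)) := by
  intro k
  induction k with
  | zero => intro _ x hx; exact ⟨fun _ => x, rfl, by intro i hi; simp_all, by simp⟩
  | succ k ih =>
    intro h x hx
    obtain ⟨y, hy, hyx⟩ := h k (by omega) x hx
    obtain ⟨u, h1, h2, h3⟩ := ih (fun i hi => h i (by omega)) y hy
    refine ⟨fun i => if i ≤ k then u i else x, by simp, ?_, ?_⟩
    · intro i hi
      by_cases hik : i ≤ k
      · simpa [hik] using h2 i hik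
      · have : i = k + 1 := by omega
        subst this; simpa using hx
    · intro i hi
      by_cases hik : i + 1 ≤ k
      · simpa [hik, (by omega : i ≤ k)] using h3 i (by omega)
      · have : i = k := by omega
        subst this; simpa [h1] using hyx

theorem LPair.path {V : Type} {G : SimpleGraph V} {a₁ a₂ : V} {W : Finset V} {s t : ℕ}
    {L M : ℕ → Finset V} (P : LPair G a₁ a₂ W s t L M) (x : V) (hx : x ∈ L (s + 1))
    (hx' : x ∈ M (t + 1)) : ∃ u, IndSeq G a₁ a₂ W (s + t + 2) u := by
  obtain ⟨u, u1, u2, u3⟩ := climb G L (s + 1) (fun i hi => P.Lcov i (by omega)) x hx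
  obtain ⟨w, w1, w2, w3⟩ := climb G M (t + 1) (fun i hi => P.Mcov i (by omega)) x hx'
  set f : ℕ → V := fun i => if i ≤ s + 1 then u i else w (s + t + 2 - i) with hf
  have fL : ∀ i, i ≤ s + 1 → f i = u i := by intro i hi; simp [hf, hi]
  have fM : ∀ i, s + 1 ≤ i → f i = w (s + t + 2 - i) := by
    intro i hi
    by_cases h : i = s + 1
    · subst h
      rw [fL _ le_rfl, u1, (by omega : s + t + 2 - (s + 1) = t + 1), w1]
    · simp only [hf]
      rw [if_neg (by omega)]
  refine ⟨f, ?_, ?_, ?_, ?_, ?_, ?_⟩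
  · rw [fL _ (by omega)]
    have := u2 0 (by omega)
    rw [P.L0] at this; simpa using this
  · rw [fM _ (by omega)]
    have := w2 0 (by omega)
    rw [P.M0] at this; simpa using this
  · intro i hi
    by_cases h : i + 1 ≤ s + 1
    · rw [fL _ h, fL _ (by omega)]; exact u3 i (by omega)
    · rw [fM _ (by omega : s + 1 ≤ i), fM _ (by omega)]
      have := w3 (s + t + 2 - (i + 1)) (by omega)
      rw [(by omega : s + t + 2 - (i + 1) + 1 = s + t + 2 - i)] at this
      exact this.symm
  · intro i j hij hj heq
    by_cases h : j ≤ s + 1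
    · rw [fL _ h, fL _ (by omega)] at heq
      exact P.Ldis i j hij h _ (u2 i (by omega)) (heq ▸ u2 j h)
    · rw [fM j (by omega)] at heq
      have hj' := w2 (s + t + 2 - j) (by omega)
      by_cases h' : i ≤ s
      · rw [fL _ (by omega)] at heq
        exact P.dis i (s + t + 2 - j) (by omega) (by omega) (by omega) _ (u2 i (by omega))
          (heq ▸ hj')
      · rw [fM i (by omega)] at heq
        exact P.Mdis (s + t + 2 - j) (s + t + 2 - i) (by omega) (by omega) _ hj'
          (heq ▸ w2 (s + t + 2 - i) (by omega))
  · intro i j hij hj hadj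
    by_cases h : j ≤ s + 1
    · rw [fL _ h, fL _ (by omega)] at hadj
      exact P.Lanti i j hij h _ (u2 i (by omega)) _ (u2 j h) hadj
    · rw [fM j (by omega)] at hadj
      have hj' := w2 (s + t + 2 - j) (by omega)
      by_cases h' : i ≤ s
      · rw [fL _ (by omega)] at hadj
        exact P.anti i (s + t + 2 - j) (by omega) (by omega) (by omega) _ (u2 i (by omega)) _
          hj' hadj
      · rw [fM i (by omega)] at hadj
        exact P.Manti (s + t + 2 - j) (s + t + 2 - i) (by omega) (by omega) _ hj' _
          (w2 (s + t + 2 - i) (by omega)) hadj.symm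
  · intro i hi
    by_cases h : i ≤ s + 1
    · rw [fL _ h]; exact P.LW i h _ (u2 i h)
    · rw [fM _ (by omega)]; exact P.MW _ (by omega) _ (w2 _ (by omega))

/-- shortening the second levelling -/
theorem LPair.shorten {V : Type} {G : SimpleGraph V} {a₁ a₂ : V} {W : Finset V} {s t : ℕ}
    {L M : ℕ → Finset V} (P : LPair G a₁ a₂ W s t L M) (k : ℕ) (hk : k < t) (Z : Finset V)
    (hZ : Z ⊆ L (s + 1)) (hc : ∀ v ∈ Z, ∃ u ∈ M k, G.Adj u v)
    (ha : ∀ j, j < k → ∀ u ∈ M j, ∀ v ∈ Z, ¬ G.Adj u v) :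
    LPair G a₁ a₂ W s k L (fun j => if j ≤ k then M j else Z) where
  L0 := P.L0
  M0 := by simpa using P.M0
  LW := P.LW
  MW := by
    intro i hi v hv
    split_ifs at hv with h
    · exact P.MW i (by omega) v hv
    · exact P.LW (s + 1) le_rfl v (hZ hv)
  Ldis := P.Ldis
  Mdis := by
    intro i j hij hj v hv hv'
    split_ifs at hv hv' with h h' h'
    · exact P.Mdis i j hij (by omega) v hv hv'
    · exact P.dis (s + 1) i (by omega) (by omega) (by omega) v (hZ hv') hv
    · omega
    · omega
  Lcov := P.Lcov
  Mcov := by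
    intro i hi v hv
    by_cases h : i + 1 ≤ k
    · simp only [h, (by omega : i ≤ k), if_true] at hv ⊢
      exact P.Mcov i (by omega) v hv
    · have : i = k := by omega
      subst this
      simp at hv ⊢
      exact hc v hv
  Lanti := P.Lanti
  Manti := by
    intro i j hij hj u hu v hv
    split_ifs at hu hv with h h' h'
    · exact P.Manti i j hij (by omega) u hu v hv
    · exact ha i (by omega) u hu v hv
    · omega
    · omega
  dis := by
    intro i j hi hj hij v hv hv'
    split_ifs at hv' with h
    · exact P.dis i j hi (by omega) (by omega) v hv hv'
    · exact P.Ldis i (s + 1) (by omega) le_rfl v hv (hZ hv')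
  anti := by
    intro i j hi hj hij u hu v hv
    split_ifs at hv with h
    · exact P.anti i j hi (by omega) (by omega) u hu v hv
    · exact P.Lanti i (s + 1) (by omega) le_rfl u hu v (hZ hv)

/-- extending the first levelling -/
theorem LPair.extend {V : Type} {G : SimpleGraph V} {a₁ a₂ : V} {W : Finset V} {s t : ℕ}
    {L M : ℕ → Finset V} (P : LPair G a₁ a₂ W s t L M) (A C X Y X' U : Finset V)
    (hU : U ⊆ L (s + 1)) (hUM : ∀ j, j < t → ∀ u ∈ M j, ∀ v ∈ U, ¬ G.Adj u v)
    (hA : A ⊆ M t) (hC : C ⊆ L s)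
    (hX : ∀ x ∈ X, x ∈ U ∨ x ∈ M (t + 1)) (hY : ∀ x ∈ Y, x ∈ U ∨ x ∈ M (t + 1))
    (hX' : X' ⊆ X) (hAX : ∀ x ∈ X, ∃ a ∈ A, G.Adj a x) (hCY : ∀ x ∈ Y, ∃ a ∈ C, G.Adj a x)
    (hCX : ∀ u ∈ C, ∀ v ∈ X, ¬ G.Adj u v) (hAY : ∀ u ∈ A, ∀ v ∈ Y, ¬ G.Adj u v)
    (hYX : ∀ x ∈ X', ∃ a ∈ Y, G.Adj a x) (hne : X'.Nonempty) :
    LPair G a₁ a₂ W (s + 1) t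
      (fun i => if i < s then L i else if i = s then C else if i = s + 1 then Y else X')
      (fun j => if j < t then M j else if j = t then A else X) := by
  have XY : ∀ v ∈ Y, v ∉ X := by
    intro v hv hv'
    obtain ⟨a, ha, h⟩ := hAX v hv'
    exact hAY a ha v hv h
  have hLB : ∀ v, v ∈ U ∨ v ∈ M (t + 1) → ∀ i, i < s → ∀ u ∈ L i, ¬ G.Adj u v := by
    intro v hv i hi u hu
    rcases hv with hv | hv
    · exact P.Lanti i (s + 1) (by omega) le_rfl u hu v (hU hv)
    · exact P.anti i (t + 1) (by omega) le_rfl (by omega) u hu v hv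
  have hMB : ∀ v, v ∈ U ∨ v ∈ M (t + 1) → ∀ i, i < t → ∀ u ∈ M i, ¬ G.Adj u v := by
    intro v hv i hi u hu
    rcases hv with hv | hv
    · exact hUM i hi u hu v hv
    · exact P.Manti i (t + 1) (by omega) le_rfl u hu v hv
  have dL : ∀ v, v ∈ U ∨ v ∈ M (t + 1) → ∀ i, i ≤ s → v ∉ L i := by
    intro v hv i hi hv'
    rcases hv with hv | hv
    · exact P.Ldis i (s + 1) (by omega) le_rfl v hv' (hU hv)
    · exact P.dis i (t + 1) (by omega) le_rfl (by omega) v hv' hv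
  have dM : ∀ v, v ∈ U ∨ v ∈ M (t + 1) → ∀ i, i ≤ t → v ∉ M i := by
    intro v hv i hi hv'
    rcases hv with hv | hv
    · exact P.dis (s + 1) i (by omega) (by omega) (by omega) v (hU hv) hv'
    · exact P.Mdis i (t + 1) (by omega) le_rfl v hv' hv
  have wB : ∀ v, v ∈ U ∨ v ∈ M (t + 1) → v ∈ W := by
    intro v hv
    rcases hv with hv | hv
    · exact P.LW (s + 1) le_rfl v (hU hv)
    · exact P.MW (t + 1) le_rfl v hv
  have hX2 : ∀ x ∈ X', x ∈ U ∨ x ∈ M (t + 1) := fun x hx => hX x (hX' hx)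
  set L' : ℕ → Finset V :=
    fun i => if i < s then L i else if i = s then C else if i = s + 1 then Y else X' with hL'
  set M' : ℕ → Finset V := fun j => if j < t then M j else if j = t then A else X with hM'
  have L1 : ∀ i, i < s → L' i = L i := by intro i hi; simp [hL', hi]
  have L2 : L' s = C := by simp [hL']
  have L3 : L' (s + 1) = Y := by simp [hL']
  have L4 : L' (s + 2) = X' := by simp [hL']
  have M1 : ∀ i, i < t → M' i = M i := by intro i hi; simp [hM', hi]
  have M2 : M' t = A := by simp [hM']
  have M3 : M' (t + 1) = X := by simp [hM']
  have Ls : ∀ i, i ≤ s → ∀ v ∈ L' i, v ∈ L i := by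
    intro i hi v hv
    rcases Nat.lt_or_eq_of_le hi with h | h
    · rwa [L1 i h] at hv
    · subst h; rw [L2] at hv; exact hC hv
  have Ms : ∀ i, i ≤ t → ∀ v ∈ M' i, v ∈ M i := by
    intro i hi v hv
    rcases Nat.lt_or_eq_of_le hi with h | h
    · rwa [M1 i h] at hv
    · subst h; rw [M2] at hv; exact hA hv
  clear_value L' M'
  have Lcase : ∀ i, i ≤ s + 2 → i < s ∨ i = s ∨ i = s + 1 ∨ i = s + 2 := by omega
  have Mcase : ∀ i, i ≤ t + 1 → i < t ∨ i = t ∨ i = t + 1 := by omega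
  obtain ⟨x₀, hx₀⟩ := hne
  refine ⟨?_, ?_, ?_, ?_, ?_, ?_, ?_, ?_, ?_, ?_, ?_, ?_⟩
  · rcases Nat.eq_zero_or_pos s with h | h
    · obtain ⟨y, hy, _⟩ := hYX x₀ hx₀
      obtain ⟨z, hz, _⟩ := hCY y hy
      subst h
      rw [L2]
      rw [P.L0] at hC
      exact (Finset.subset_singleton_iff.1 hC).resolve_left (Finset.ne_empty_of_mem hz)
    · rw [L1 0 h]; exact P.L0
  · rcases Nat.eq_zero_or_pos t with h | h
    · obtain ⟨z, hz, _⟩ := hAX x₀ (hX' hx₀)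
      subst h
      rw [M2]
      rw [P.M0] at hA
      exact (Finset.subset_singleton_iff.1 hA).resolve_left (Finset.ne_empty_of_mem hz)
    · rw [M1 0 h]; exact P.M0
  · intro i hi v hv
    rcases Lcase i (by omega) with h | rfl | rfl | rfl
    · exact P.LW i (by omega) v (Ls i (by omega) v hv)
    · exact P.LW i (by omega) v (Ls i (by omega) v hv)
    · rw [L3] at hv; exact wB v (hY v hv)
    · rw [L4] at hv; exact wB v (hX2 v hv)
  · intro i hi v hv
    rcases Mcase i (by omega) with h | rfl | rfl
    · exact P.MW i (by omega) v (Ms i (by omega) v hv)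
    · exact P.MW i (by omega) v (Ms i (by omega) v hv)
    · rw [M3] at hv; exact wB v (hX v hv)
  · intro i j hij hj v hv hv'
    by_cases hjs : j ≤ s
    · exact P.Ldis i j hij (by omega) v (Ls i (by omega) v hv) (Ls j hjs v hv')
    · by_cases his : i ≤ s
      · have hv2 := Ls i his v hv
        rcases Lcase j (by omega) with h | rfl | rfl | rfl
        · omega
        · omega
        · rw [L3] at hv'; exact dL v (hY v hv') i his hv2
        · rw [L4] at hv'; exact dL v (hX2 v hv') i his hv2
      · have h1 : i = s + 1 := by omega
        have h2 : j = s + 2 := by omega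
        subst h1 h2
        rw [L3] at hv; rw [L4] at hv'
        exact XY v hv (hX' hv')
  · intro i j hij hj v hv hv'
    by_cases hjs : j ≤ t
    · exact P.Mdis i j hij (by omega) v (Ms i (by omega) v hv) (Ms j hjs v hv')
    · have : j = t + 1 := by omega
      subst this
      rw [M3] at hv'
      exact dM v (hX v hv') i (by omega) (Ms i (by omega) v hv)
  · intro i hi v hv
    rcases Lcase i (by omega) with h | rfl | rfl | rfl
    · rw [L1 i h]; exact P.Lcov i (by omega) v (Ls (i + 1) (by omega) v hv)
    · rw [L2]; rw [L3] at hv; exact hCY v hv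
    · rw [L3]; rw [L4] at hv; exact hYX v hv
    · omega
  · intro i hi v hv
    rcases Mcase i (by omega) with h | rfl | rfl
    · rw [M1 i h]; exact P.Mcov i (by omega) v (Ms (i + 1) (by omega) v hv)
    · rw [M2]; rw [M3] at hv; exact hAX v hv
    · omega
  · intro i j hij hj u hu v hv
    by_cases hjs : j ≤ s
    · exact P.Lanti i j hij (by omega) u (Ls i (by omega) u hu) v (Ls j hjs v hv)
    · have his : i ≤ s := by omega
      rcases Lcase j (by omega) with h | rfl | rfl | rfl
      · omega
      · omega
      · rw [L3] at hv; exact hLB v (hY v hv) i (by omega) u (Ls i his u hu)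
      · rw [L4] at hv
        rcases Nat.lt_or_eq_of_le his with h | rfl
        · exact hLB v (hX2 v hv) i h u (Ls i his u hu)
        · rw [L2] at hu; exact hCX u hu v (hX' hv)
  · intro i j hij hj u hu v hv
    by_cases hjs : j ≤ t
    · exact P.Manti i j hij (by omega) u (Ms i (by omega) u hu) v (Ms j hjs v hv)
    · have : j = t + 1 := by omega
      subst this
      rw [M3] at hv
      exact hMB v (hX v hv) i (by omega) u (Ms i (by omega) u hu)
  · intro i j hi hj hij v hv hv'
    by_cases his : i ≤ s
    · have hv2 := Ls i his v hv
      by_cases hjt : j ≤ t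
      · exact P.dis i j (by omega) hj (by omega) v hv2 (Ms j hjt v hv')
      · have : j = t + 1 := by omega
        subst this
        rw [M3] at hv'
        exact dL v (hX v hv') i his hv2
    · rcases Lcase i (by omega) with h | rfl | rfl | rfl
      · omega
      · omega
      · rw [L3] at hv
        by_cases hjt : j ≤ t
        · exact dM v (hY v hv) j hjt (Ms j hjt v hv')
        · have : j = t + 1 := by omega
          subst this
          rw [M3] at hv'
          exact XY v hv hv'
      · rw [L4] at hv
        have hjt : j ≤ t := by omega
        exact dM v (hX2 v hv) j hjt (Ms j hjt v hv')
  · intro i j hi hj hij u hu v hv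
    rcases Nat.lt_or_eq_of_le hi with hi' | rfl
    · have his : i ≤ s := by omega
      have hu2 := Ls i his u hu
      by_cases hjt : j ≤ t
      · exact P.anti i j his (by omega) (by omega) u hu2 v (Ms j hjt v hv)
      · have : j = t + 1 := by omega
        subst this
        rw [M3] at hv
        rcases Nat.lt_or_eq_of_le his with h | rfl
        · exact hLB v (hX v hv) i h u hu2
        · rw [L2] at hu; exact hCX u hu v hv
    · rw [L3] at hu
      have hjt : j ≤ t := by omega
      intro hadj
      rcases Nat.lt_or_eq_of_le hjt with h | rfl
      · exact hMB u (hY u hu) j h v (Ms j hjt v hv) hadj.symm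
      · rw [M2] at hv; exact hAY v hv u hu hadj.symm

theorem arith1 (K η δ : ℝ) (hK : 3 ≤ K) (hη : 0 < η) (ℓ t k : ℕ) (hk : k < t)
    (h : 3 * η * K ^ ((t + 2) * (ℓ + t + 1)) < δ) :
    3 * η * K ^ ((k + 2) * (ℓ + t + 1)) < δ / (t + 1) := by
  rw [lt_div_iff₀ (by positivity)]
  refine lt_of_le_of_lt ?_ h
  have h1 : ((t:ℝ) + 1) ≤ K ^ (ℓ + t + 1) := by
    have h2 : t + 1 < 3 ^ (t + 1) := Nat.lt_pow_self (by norm_num)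
    have h3 : ((t:ℝ) + 1) ≤ 3 ^ (t + 1) := by exact_mod_cast h2.le
    calc ((t:ℝ) + 1) ≤ 3 ^ (t + 1) := h3
      _ ≤ K ^ (t + 1) := by gcongr
      _ ≤ K ^ (ℓ + t + 1) := by
        apply pow_le_pow_right₀ (by linarith); omega
  have h2 : K ^ ((k + 2) * (ℓ + t + 1)) * K ^ (ℓ + t + 1) ≤ K ^ ((t + 2) * (ℓ + t + 1)) := by
    rw [← pow_add]
    apply pow_le_pow_right₀ (by linarith)
    nlinarith
  have h0 : (0:ℝ) ≤ K ^ ((k + 2) * (ℓ + t + 1)) := by positivity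
  calc 3 * η * K ^ ((k + 2) * (ℓ + t + 1)) * (t + 1)
      ≤ 3 * η * K ^ ((k + 2) * (ℓ + t + 1)) * K ^ (ℓ + t + 1) := by gcongr
    _ = 3 * η * (K ^ ((k + 2) * (ℓ + t + 1)) * K ^ (ℓ + t + 1)) := by ring
    _ ≤ _ := by gcongr

theorem arith2 (η δ : ℝ) (m : ℕ) (hm : 1 ≤ m) (hη : 0 < η) (ℓ t : ℕ) (hℓ : 1 ≤ ℓ)
    (h : 3 * η * ((m:ℝ) + 2) ^ ((t + 2) * (ℓ + t + 1)) < δ) :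
    3 * η * ((m:ℝ) + 2) ^ ((t + 2) * (ℓ + t)) < δ / (2 * (t + 1) * (m + 1)) - 4 * η := by
  have hm' : (1:ℝ) ≤ m := by exact_mod_cast hm
  set K : ℝ := (m:ℝ) + 2 with hK
  have hK3 : 3 ≤ K := by linarith
  set E := K ^ ((t + 2) * (ℓ + t)) with hE
  have hE3 : 3 ≤ E := by
    calc (3:ℝ) ≤ K := hK3
      _ = K ^ 1 := (pow_one _).symm
      _ ≤ E := by
        apply pow_le_pow_right₀ (by linarith)
        nlinarith
  have e1 : K ^ ((t + 2) * (ℓ + t + 1)) = E * (K ^ t * K ^ 2) := by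
    rw [hE, ← pow_add, ← pow_add]; ring_nf
  have h1 : ((t:ℝ) + 1) ≤ K ^ t := by
    have h2 : t < 3 ^ t := Nat.lt_pow_self (by norm_num)
    have h3 : ((t:ℝ) + 1) ≤ 3 ^ t := by exact_mod_cast h2
    exact h3.trans (by gcongr)
  have h2 : 3 * ((m:ℝ) + 1) ≤ K ^ 2 := by nlinarith
  have h3 : ((t:ℝ) + 1) * (3 * ((m:ℝ) + 1)) ≤ K ^ t * K ^ 2 := by gcongr
  rw [e1] at h
  have h4 : 3 * η * E + 4 * η < δ / (2 * (t + 1) * (m + 1)) := by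
    rw [lt_div_iff₀ (by positivity)]
    refine lt_of_le_of_lt ?_ h
    have h5 : 3 * η * E + 4 * η ≤ 3 * η * (E * (3 / 2)) := by nlinarith
    calc (3 * η * E + 4 * η) * (2 * (t + 1) * (m + 1))
        ≤ 3 * η * (E * (3 / 2)) * (2 * (t + 1) * (m + 1)) := by gcongr
      _ = 3 * η * (E * (((t:ℝ) + 1) * (3 * ((m:ℝ) + 1)))) := by ring
      _ ≤ _ := by gcongr
  linarith

theorem mainInd {V : Type} [DecidableEq V] (G : SimpleGraph V) (a₁ a₂ : V) (W : Finset V)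
    (η q r : ℝ) (m : ℕ)
    (hm : 1 ≤ m) (hq : 0 < q) (hr : 1 ≤ r) (hqr : q * r = η) (hq2 : 2 * q ≤ r ^ (m - 1))
    (hdeg : ∀ v (B : Finset V), ((covS G {v} B).card : ℝ) ≤ η)
    (hcoh : ∀ Y X : Finset V, Disjoint Y X → q ≤ (Y.card : ℝ) → η ≤ (X.card : ℝ) →
      ∃ y ∈ Y, ∃ x ∈ X, G.Adj y x) :
    ∀ (N ℓ s t : ℕ) (L M : ℕ → Finset V) (δ : ℝ), ℓ + 2 * t ≤ N → 1 ≤ ℓ →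
      LPair G a₁ a₂ W s t L M → 3 * η * ((m:ℝ) + 2) ^ ((t + 2) * (ℓ + t + 1)) < δ →
      δ ≤ ((L (s + 1)).card : ℝ) → δ ≤ ((M (t + 1)).card : ℝ) →
      ∃ u, IndSeq G a₁ a₂ W (ℓ + s + t + 2) u := by
  classical
  have hη : 0 < η := by rw [← hqr]; positivity
  have hm' : (1:ℝ) ≤ m := by exact_mod_cast hm
  intro N
  induction N with
  | zero => intro ℓ s t L M δ h1 h2; omega
  | succ N ih =>
  intro ℓ s t L M δ hN hℓ P hδ hLδ hMδ
  set U := (L (s + 1)).filter (fun b => ∀ j, j < t → ∀ u ∈ M j, ¬ G.Adj u b) with hU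
  set Z : ℕ → Finset V := fun i => (L (s + 1)).filter
    (fun b => (∃ u ∈ M i, G.Adj u b) ∧ ∀ j, j < i → ∀ u ∈ M j, ¬ G.Adj u b) with hZ
  have hUL : U ⊆ L (s + 1) := Finset.filter_subset _ _
  have hpig : (∃ k, k < t ∧ δ / (t + 1) ≤ ((Z k).card : ℝ)) ∨ δ / (t + 1) ≤ (U.card : ℝ) := by
    by_contra hcon
    push Not at hcon
    obtain ⟨hc1, hc2⟩ := hcon
    have hsub : L (s + 1) ⊆ (Finset.range t).biUnion Z ∪ U := by
      intro b hb
      rw [Finset.mem_union]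
      by_cases hex : ∃ j, j < t ∧ ∃ u ∈ M j, G.Adj u b
      · left
        have hs := Nat.find_spec hex
        rw [Finset.mem_biUnion]
        refine ⟨Nat.find hex, Finset.mem_range.2 hs.1, ?_⟩
        rw [hZ]
        refine Finset.mem_filter.2 ⟨hb, hs.2, ?_⟩
        intro j hj u hu hadj
        exact Nat.find_min hex hj ⟨hj.trans hs.1, u, hu, hadj⟩
      · right
        refine Finset.mem_filter.2 ⟨hb, ?_⟩
        intro j hj u hu hadj
        exact hex ⟨j, hj, u, hu, hadj⟩
    have h1 : ((L (s + 1)).card : ℝ) ≤ ∑ k ∈ Finset.range t, ((Z k).card : ℝ) + U.card := by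
      have := (Finset.card_le_card hsub).trans (Finset.card_union_le _ _)
      have h2 : ((Finset.range t).biUnion Z).card ≤ ∑ k ∈ Finset.range t, (Z k).card :=
        Finset.card_biUnion_le
      exact_mod_cast this.trans (by omega)
    have h2 : ∑ k ∈ Finset.range t, ((Z k).card : ℝ) ≤ ∑ k ∈ Finset.range t, δ / ((t:ℝ) + 1) :=
      Finset.sum_le_sum (fun k hk => (hc1 k (Finset.mem_range.1 hk)).le)
    rw [Finset.sum_const, Finset.card_range, nsmul_eq_mul] at h2
    have h3 : (t:ℝ) * (δ / (t + 1)) + δ / (t + 1) = δ := by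
      field_simp
    linarith
  have hδpos : 0 < δ := lt_of_le_of_lt (by positivity) hδ
  have hδt : δ / (t + 1) ≤ δ := div_le_self hδpos.le (by
    have : (0:ℝ) ≤ t := by positivity
    linarith)
  rcases hpig with ⟨k, hk, hZk⟩ | hUc
  · -- shorten the second levelling
    have P' := P.shorten k hk (Z k) (Finset.filter_subset _ _)
      (fun v hv => (Finset.mem_filter.1 hv).2.1)
      (fun j hj u hu v hv => (Finset.mem_filter.1 hv).2.2 j hj u hu)
    have hx := ih (ℓ + t - k) s k _ _ (δ / (t + 1)) (by omega) (by omega) P' (by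
      rw [(by omega : ℓ + t - k + k + 1 = ℓ + t + 1)]
      exact arith1 _ η δ (by linarith) hη ℓ t k hk hδ) (by linarith) (by simpa using hZk)
    rwa [(by omega : ℓ + t - k + s + k + 2 = ℓ + s + t + 2)] at hx
  · -- extend the first levelling
    have har := arith2 η δ m hm hη ℓ t hℓ hδ
    set δ' := δ / (2 * (t + 1) * (m + 1)) - 4 * η with hδ'
    have hδ'pos : 0 < δ' := lt_of_le_of_lt (by positivity) har
    have hhalf : ((m:ℝ) + 1) * (δ' + η + 3 * η) = δ / (t + 1) / 2 := by
      rw [hδ']; field_simp; ring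
    have hκz : δ' + η ≤ δ / (t + 1) / 2 := by
      rw [← hhalf]; nlinarith
    have hUM : ∀ j, j < t → ∀ u ∈ M j, ∀ v ∈ U, ¬ G.Adj u v :=
      fun j hj u hu v hv => (Finset.mem_filter.1 hv).2 j hj u hu
    have hex : ∃ A ⊆ M t, ∃ C ⊆ L s, ∃ X Y : Finset V,
        (∀ x ∈ X, x ∈ U ∨ x ∈ M (t + 1)) ∧ (∀ x ∈ Y, x ∈ U ∨ x ∈ M (t + 1)) ∧
        (∀ x ∈ X, ∃ a ∈ A, G.Adj a x) ∧ (∀ x ∈ Y, ∃ a ∈ C, G.Adj a x) ∧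
        (∀ u ∈ C, ∀ v ∈ X, ¬ G.Adj u v) ∧ (∀ u ∈ A, ∀ v ∈ Y, ¬ G.Adj u v) ∧
        δ' + η ≤ (X.card : ℝ) ∧ q ≤ (Y.card : ℝ) := by
      have hsplit : ∀ B : Finset V, (∀ x ∈ B, x ∈ U ∨ x ∈ M (t + 1)) →
          (∀ b ∈ B, ∃ a ∈ M t, G.Adj a b) → (∀ b ∈ B, ∃ a ∈ L s, G.Adj a b) →
          δ / (t + 1) / 2 ≤ (B.card : ℝ) → ∃ A ⊆ M t, ∃ C ⊆ L s, ∃ X Y : Finset V,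
        (∀ x ∈ X, x ∈ U ∨ x ∈ M (t + 1)) ∧ (∀ x ∈ Y, x ∈ U ∨ x ∈ M (t + 1)) ∧
        (∀ x ∈ X, ∃ a ∈ A, G.Adj a x) ∧ (∀ x ∈ Y, ∃ a ∈ C, G.Adj a x) ∧
        (∀ u ∈ C, ∀ v ∈ X, ¬ G.Adj u v) ∧ (∀ u ∈ A, ∀ v ∈ Y, ¬ G.Adj u v) ∧
        δ' + η ≤ (X.card : ℝ) ∧ q ≤ (Y.card : ℝ) := by
        intro B hB hBA hBC hBc
        obtain ⟨A, hA, C, hC, h1, h2⟩ := split G (M t) (L s) B η q r (δ' + η) m hm hq hr hqr hq2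
          (by positivity) (fun v => hdeg v B) hBA hBC (by rw [hhalf]; exact hBc)
        refine ⟨A, hA, C, hC, _, _, ?_, ?_, ?_, ?_, ?_, ?_, h1, h2⟩
        · intro x hx; exact hB x (mem_covS.1 (Finset.mem_sdiff.1 hx).1).1
        · intro x hx; exact hB x (mem_covS.1 (Finset.mem_sdiff.1 hx).1).1
        · intro x hx; exact (mem_covS.1 (Finset.mem_sdiff.1 hx).1).2
        · intro x hx; exact (mem_covS.1 (Finset.mem_sdiff.1 hx).1).2
        · intro u hu x hx hadj
          rw [Finset.mem_sdiff] at hx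
          exact hx.2 (mem_covS.2 ⟨(mem_covS.1 hx.1).1, u, hu, hadj⟩)
        · intro u hu x hx hadj
          rw [Finset.mem_sdiff] at hx
          exact hx.2 (mem_covS.2 ⟨(mem_covS.1 hx.1).1, u, hu, hadj⟩)
      by_cases c1 : δ / (t + 1) / 2 ≤ ((covS G (M t) U).card : ℝ)
      · exact hsplit _ (fun x hx => Or.inl (mem_covS.1 hx).1) (fun x hx => (mem_covS.1 hx).2)
          (fun x hx => P.Lcov s le_rfl x (hUL (mem_covS.1 hx).1)) c1
      by_cases c2 : δ / (t + 1) / 2 ≤ ((covS G (L s) (M (t + 1))).card : ℝ)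
      · exact hsplit _ (fun x hx => Or.inr (mem_covS.1 hx).1)
          (fun x hx => P.Mcov t le_rfl x (mem_covS.1 hx).1) (fun x hx => (mem_covS.1 hx).2) c2
      push Not at c1 c2
      have d1 := sub_le_sdiff U (covS G (M t) U)
      have d2 := sub_le_sdiff (M (t + 1)) (covS G (L s) (M (t + 1)))
      refine ⟨M t, le_rfl, L s, le_rfl, M (t + 1) \ covS G (L s) (M (t + 1)),
        U \ covS G (M t) U, ?_, ?_, ?_, ?_, ?_, ?_, by linarith, ?_⟩
      · intro x hx; exact Or.inr (Finset.mem_sdiff.1 hx).1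
      · intro x hx; exact Or.inl (Finset.mem_sdiff.1 hx).1
      · intro x hx; exact P.Mcov t le_rfl x (Finset.mem_sdiff.1 hx).1
      · intro x hx; exact P.Lcov s le_rfl x (hUL (Finset.mem_sdiff.1 hx).1)
      · intro u hu x hx hadj
        rw [Finset.mem_sdiff] at hx
        exact hx.2 (mem_covS.2 ⟨hx.1, u, hu, hadj⟩)
      · intro u hu x hx hadj
        rw [Finset.mem_sdiff] at hx
        exact hx.2 (mem_covS.2 ⟨hx.1, u, hu, hadj⟩)
      · have : q ≤ η := by nlinarith
        linarith
    obtain ⟨A, hA, C, hC, X, Y, hX, hY, hAX, hCY, hCX, hAY, hXc, hYc⟩ := hex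
    have hX'c : δ' ≤ ((covS G Y X).card : ℝ) := by
      by_contra hlt
      push Not at hlt
      have := sub_le_sdiff X (covS G Y X)
      obtain ⟨y, hy, x, hx, hadj⟩ := hcoh Y (X \ covS G Y X) (by
        rw [Finset.disjoint_left]
        intro v hv hv'
        obtain ⟨a, ha, h⟩ := hAX v (Finset.mem_sdiff.1 hv').1
        exact hAY a ha v hv h) hYc (by linarith)
      rw [Finset.mem_sdiff] at hx
      exact hx.2 (mem_covS.2 ⟨hx.1, y, hy, hadj⟩)
    have hX's : covS G Y X ⊆ X := fun x hx => (mem_covS.1 hx).1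
    have hne : (covS G Y X).Nonempty := by
      rw [← Finset.card_pos]
      have : (0:ℝ) < ((covS G Y X).card : ℝ) := by linarith
      exact_mod_cast this
    have P' := P.extend A C X Y (covS G Y X) U hUL hUM hA hC hX hY hX's hAX hCY hCX hAY
      (fun x hx => (mem_covS.1 hx).2) hne
    rcases Nat.lt_or_ge 1 ℓ with hl | hl
    · have hx := ih (ℓ - 1) (s + 1) t _ _ δ' (by omega) (by omega) P' (by
        rw [(by omega : ℓ - 1 + t + 1 = ℓ + t)]
        exact har) (by rw [if_neg (by omega), if_neg (by omega), if_neg (by omega)]; exact hX'c) (by simp; linarith)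
      rwa [(by omega : ℓ - 1 + (s + 1) + t + 2 = ℓ + s + t + 2)] at hx
    · obtain ⟨x, hx⟩ := hne
      have hx := P'.path x (by rw [if_neg (by omega), if_neg (by omega), if_neg (by omega)]; exact hx) (by simpa using hX's hx)
      rwa [(by omega : s + 1 + t + 2 = ℓ + s + t + 2)] at hx

theorem IndSeq.walk {V : Type} {G : SimpleGraph V} (u : ℕ → V) : ∀ (N : ℕ),
    (∀ i, i < N → G.Adj (u i) (u (i + 1))) →
    ∃ p : G.Walk (u 0) (u N), p.length = N ∧ p.support = (List.range (N + 1)).map u ∧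
      ∀ i, i < N → s(u i, u (i + 1)) ∈ p.edges := by
  intro N
  induction N with
  | zero => intro _; exact ⟨SimpleGraph.Walk.nil, by simp⟩
  | succ N ih =>
    intro h
    obtain ⟨p, h1, h2, h3⟩ := ih (fun i hi => h i (by omega))
    refine ⟨p.concat (h N (by omega)), by simp [h1], ?_, ?_⟩
    · rw [SimpleGraph.Walk.support_concat, h2, List.range_succ (n := N + 1)]
      simp
    · intro i hi
      rw [SimpleGraph.Walk.edges_concat]
      rcases Nat.lt_or_eq_of_le (Nat.lt_succ_iff.1 hi) with h | rfl
      · simp [h3 i h]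
      · simp

/-- the pathfinder with possibly intersecting bases. -/
theorem stmt_16 {V : Type} [Fintype V] [DecidableEq V] (G : SimpleGraph V) [DecidableRel G.Adj]
    (c : ℝ) (hc : 0 < c) (hci : ∃ m : ℕ, (m : ℝ) * c = 1)
    (ℓ s₁ t₁ : ℕ) (hℓ : 0 < ℓ) (hs : 0 < s₁) (ht : 0 < t₁)
    (d ε : ℝ) (hd : 0 < d) (hε0 : 0 < ε)
    (hεd : (2 + 1 / c) ^ ((t₁ + 1) * (ℓ + t₁)) * ε < d / 3)
    (hsparse : ∀ v : V, (G.degree v : ℝ) < ε * Fintype.card V)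
    (hcoherent : ¬ ∃ A B : Finset V, Disjoint A B ∧
      (∀ a ∈ A, ∀ b ∈ B, ¬ G.Adj a b) ∧
      ε * (Fintype.card V : ℝ) ^ (1 - c) ≤ (A.card : ℝ) ∧
      ε * Fintype.card V ≤ (B.card : ℝ))
    (L M : ℕ → Finset V) (hL : IsLevelling G L s₁) (hM : IsLevelling G M t₁)
    (a₁ a₂ : V) (ha₁ : L 0 = {a₁}) (ha₂ : M 0 = {a₂})
    (hB1 : d * Fintype.card V ≤ ((L s₁).card : ℝ))
    (hB2 : d * Fintype.card V ≤ ((M t₁).card : ℝ))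
    (hint : ((Finset.range (s₁ + 1)).biUnion L) ∩ ((Finset.range (t₁ + 1)).biUnion M) =
      (({a₁} : Finset V) ∩ {a₂}) ∪ (L s₁ ∩ M t₁))
    (hedge : ∀ x ∈ (Finset.range s₁).biUnion L,
      ∀ y ∈ (Finset.range (t₁ + 1)).biUnion M, G.Adj x y →
        x ∈ L (s₁ - 1) ∧ y ∈ M t₁) :
    ∃ p : G.Walk a₁ a₂, p.length = ℓ + s₁ + t₁ ∧
      (∀ h : a₁ = a₂, (p.copy rfl h.symm).IsCycle) ∧ (a₁ ≠ a₂ → p.IsPath) ∧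
      (∀ x ∈ p.support,
        x ∈ ((Finset.range (s₁ + 1)).biUnion L) ∪ ((Finset.range (t₁ + 1)).biUnion M)) ∧
      (∀ x ∈ p.support, ∀ y ∈ p.support, G.Adj x y → s(x, y) ∈ p.edges) := by
  classical
  obtain ⟨hL1, hLc, hLd, hLcov, hLa⟩ := hL
  obtain ⟨hM1, hMc, hMd, hMcov, hMa⟩ := hM
  obtain ⟨m, hmc⟩ := hci
  obtain ⟨s, rfl⟩ : ∃ s, s₁ = s + 1 := ⟨s₁ - 1, by omega⟩
  obtain ⟨t, rfl⟩ : ∃ t, t₁ = t + 1 := ⟨t₁ - 1, by omega⟩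
  set n : ℝ := (Fintype.card V : ℝ) with hn
  have hn1 : 1 ≤ n := by
    have : 0 < Fintype.card V := Fintype.card_pos_iff.2 ⟨a₁⟩
    rw [hn]; exact_mod_cast this
  have hm : 1 ≤ m := by
    rcases Nat.eq_zero_or_pos m with h | h
    · subst h; simp at hmc
    · exact h
  have hm' : (1:ℝ) ≤ m := by exact_mod_cast hm
  have hmc' : 1 / c = m := by field_simp; linarith
  rw [hmc'] at hεd
  have hKe : (2 + (m:ℝ)) ^ ((t + 1 + 1) * (ℓ + (t + 1))) = ((m:ℝ) + 2) ^ ((t + 2) * (ℓ + t + 1)) := by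
    rw [add_comm (2:ℝ)]; rfl
  rw [hKe] at hεd
  have hK1 : 1 ≤ ((m:ℝ) + 2) ^ ((t + 2) * (ℓ + t + 1)) := one_le_pow₀ (by linarith)
  have hδ : 3 * (ε * n) * ((m:ℝ) + 2) ^ ((t + 2) * (ℓ + t + 1)) < d * n := by nlinarith
  have hηpos0 : 0 < ε * n := by positivity
  have hε3n : 3 * (ε * n) < d * n :=
    lt_of_le_of_lt (le_mul_of_one_le_right (by linarith) hK1) hδ
  have hεn : ε * n < d * n := by linarith
  have hε3 : 3 * ε < 1 := by
    have h1 : ((L (s + 1)).card : ℝ) ≤ n := by rw [hn]; exact_mod_cast Finset.card_le_univ _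
    have h2 : 3 * (ε * n) < 1 * n := by nlinarith
    nlinarith
  have hηpos : 0 < ε * n := by positivity
  have hdeg : ∀ v (B : Finset V), ((covS G {v} B).card : ℝ) ≤ ε * n := by
    intro v B
    refine le_trans ?_ (hsparse v).le
    rw [← G.card_neighborFinset_eq_degree]
    have : covS G {v} B ⊆ G.neighborFinset v := by
      intro b hb
      have := (mem_covS.1 hb).2
      simpa using this
    exact_mod_cast Finset.card_le_card this
  set r : ℝ := n ^ c with hr
  have hr1 : 1 ≤ r := Real.one_le_rpow hn1 hc.le
  have hrm : r ^ m = n := by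
    rw [hr, ← Real.rpow_natCast, ← Real.rpow_mul (by linarith), mul_comm c, hmc, Real.rpow_one]
  have hqr : ε * n ^ (1 - c) * r = ε * n := by
    rw [hr, mul_assoc, ← Real.rpow_add (by linarith)]; simp
  have hq2 : 2 * (ε * n ^ (1 - c)) ≤ r ^ (m - 1) := by
    have h1 : r ^ (m - 1) * r = n := by
      rw [← pow_succ, Nat.sub_add_cancel hm, hrm]
    have h2 : 2 * (ε * n ^ (1 - c)) * r ≤ r ^ (m - 1) * r := by
      rw [h1, mul_assoc, hqr]; nlinarith
    exact le_of_mul_le_mul_right h2 (by linarith)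
  have hcoh : ∀ Y X : Finset V, Disjoint Y X → ε * n ^ (1 - c) ≤ (Y.card : ℝ) →
      ε * n ≤ (X.card : ℝ) → ∃ y ∈ Y, ∃ x ∈ X, G.Adj y x := by
    intro Y X hd h1 h2
    by_contra hno
    push Not at hno
    exact hcoherent ⟨Y, X, hd, hno, h1, h2⟩
  have hMcov' : ∀ i, i ≤ t → ∀ v ∈ M (i + 1), ∃ u ∈ M i, G.Adj u v :=
    fun i hi v hv => by simpa using hMcov (i + 1) (by omega) (by omega) v hv
  have hLcov' : ∀ i, i ≤ s → ∀ v ∈ L (i + 1), ∃ u ∈ L i, G.Adj u v :=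
    fun i hi v hv => by simpa using hLcov (i + 1) (by omega) (by omega) v hv
  have hMne : (M (t + 1)).Nonempty := by
    rw [← Finset.card_pos]
    have : (0:ℝ) < (M (t + 1)).card := by linarith
    exact_mod_cast this
  have hmL : ∀ i, i ≤ s + 1 → ∀ v ∈ L i, v ∈ (Finset.range (s + 1 + 1)).biUnion L :=
    fun i hi v hv => Finset.mem_biUnion.2 ⟨i, Finset.mem_range.2 (by omega), hv⟩
  have hmM : ∀ i, i ≤ t + 1 → ∀ v ∈ M i, v ∈ (Finset.range (t + 1 + 1)).biUnion M :=
    fun i hi v hv => Finset.mem_biUnion.2 ⟨i, Finset.mem_range.2 (by omega), hv⟩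
  have hanti : ∀ i j, i ≤ s → j ≤ t + 1 → (i < s ∨ j ≤ t) → ∀ u ∈ L i, ∀ v ∈ M j,
      ¬ G.Adj u v := by
    intro i j hi hj hij u hu v hv hadj
    obtain ⟨h1, h2⟩ := hedge u (Finset.mem_biUnion.2 ⟨i, Finset.mem_range.2 (by omega), hu⟩) v
      (hmM j hj v hv) hadj
    rcases hij with h | h
    · exact Finset.disjoint_left.1 (hLd i (s + 1 - 1) (by omega) (by omega)) hu h1
    · exact Finset.disjoint_left.1 (hMd j (t + 1) (by omega) (by omega)) hv h2
  have hne : a₁ ≠ a₂ := by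
    intro heq
    obtain ⟨x, hx⟩ := hMne
    obtain ⟨w, w1, w2, w3⟩ := climb G M (t + 1) (fun i hi => hMcov' i (by omega)) x hx
    have hw0 : w 0 = a₂ := by
      have := w2 0 (by omega); rw [ha₂] at this; simpa using this
    have hadj := w3 0 (by omega)
    rw [hw0, ← heq] at hadj
    rcases Nat.eq_zero_or_pos t with h | h
    · subst h
      have h1 : covS G {a₂} (M 1) = M 1 := by
        ext b
        rw [mem_covS]
        refine ⟨fun h => h.1, fun h => ⟨h, ?_⟩⟩
        have := hMcov' 0 le_rfl b h
        rwa [ha₂] at this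
      have h2 := hdeg a₂ (M 1)
      rw [h1] at h2
      have h3 : d * n ≤ ((M 1).card : ℝ) := by simpa using hB2
      linarith
    · exact hanti 0 1 (by omega) (by omega) (by omega) a₁ (by simp [ha₁]) (w 1)
        (w2 1 (by omega)) hadj
  have hdis : ∀ i j, i ≤ s + 1 → j ≤ t + 1 → (i ≤ s ∨ j ≤ t) → ∀ v ∈ L i, v ∉ M j := by
    intro i j hi hj hij v hv hv'
    have h1 : v ∈ (({a₁} : Finset V) ∩ {a₂}) ∪ (L (s + 1) ∩ M (t + 1)) := by
      rw [← hint]; exact Finset.mem_inter.2 ⟨hmL i hi v hv, hmM j hj v hv'⟩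
    rw [Finset.mem_union, Finset.mem_inter, Finset.mem_inter, Finset.mem_singleton,
      Finset.mem_singleton] at h1
    rcases h1 with ⟨h1, h2⟩ | ⟨h1, h2⟩
    · exact hne (h1.symm.trans h2)
    · rcases hij with h | h
      · exact Finset.disjoint_left.1 (hLd i (s + 1) (by omega) le_rfl) hv h1
      · exact Finset.disjoint_left.1 (hMd j (t + 1) (by omega) le_rfl) hv' h2
  have P : LPair G a₁ a₂ ((Finset.range (s + 1 + 1)).biUnion L ∪
      (Finset.range (t + 1 + 1)).biUnion M) s t L M := by
    refine ⟨ha₁, ha₂, ?_, ?_, ?_, ?_, hLcov', hMcov', ?_, ?_, hdis, hanti⟩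
    · intro i hi v hv; exact Finset.mem_union_left _ (hmL i hi v hv)
    · intro i hi v hv; exact Finset.mem_union_right _ (hmM i hi v hv)
    · intro i j hij hj v hv hv'; exact Finset.disjoint_left.1 (hLd i j hij hj) hv hv'
    · intro i j hij hj v hv hv'; exact Finset.disjoint_left.1 (hMd i j hij hj) hv hv'
    · intro i j hij hj u hu v hv; exact hLa j (by omega) hj i (by omega) u hu v hv
    · intro i j hij hj u hu v hv; exact hMa j (by omega) hj i (by omega) u hu v hv
  obtain ⟨u, hu0, huN, huadj, huinj, huind, huW⟩ := mainInd G a₁ a₂ _ (ε * n) (ε * n ^ (1 - c)) r m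
    hm (by positivity) hr1 hqr hq2 hdeg hcoh (ℓ + 2 * t) ℓ s t L M (d * n) le_rfl hℓ P hδ hB1 hB2
  obtain ⟨p, hp1, hp2, hp3⟩ := IndSeq.walk u (ℓ + s + t + 2) huadj
  subst hu0
  subst huN
  have hmem : ∀ x ∈ p.support, ∃ i, i ≤ ℓ + s + t + 2 ∧ u i = x := by
    intro x hx
    rw [hp2, List.mem_map] at hx
    obtain ⟨i, hi, rfl⟩ := hx
    exact ⟨i, by have := List.mem_range.1 hi; omega, rfl⟩
  refine ⟨p, by rw [hp1]; omega, fun h => absurd h hne, fun _ => ?_, ?_, ?_⟩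
  · rw [SimpleGraph.Walk.isPath_def, hp2]
    refine List.Nodup.map_on ?_ List.nodup_range
    intro i hi j hj hij
    rw [List.mem_range] at hi hj
    by_contra hne'
    rcases Nat.lt_or_gt_of_ne hne' with h | h
    · exact huinj i j h (by omega) hij
    · exact huinj j i h (by omega) hij.symm
  · intro x hx
    obtain ⟨i, hi, rfl⟩ := hmem x hx
    exact huW i hi
  · intro x hx y hy hadj
    obtain ⟨i, hi, rfl⟩ := hmem x hx
    obtain ⟨j, hj, rfl⟩ := hmem y hy
    rcases Nat.lt_trichotomy i j with h | h | h
    · by_cases h2 : j = i + 1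
      · subst h2; exact hp3 i (by omega)
      · exact absurd hadj (huind i j (by omega) hj)
    · subst h; exact absurd hadj (G.loopless.irrefl _)
    · by_cases h2 : i = j + 1
      · subst h2; rw [Sym2.eq_swap]; exact hp3 j (by omega)
      · exact absurd hadj.symm (huind j i (by omega) hi)
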